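/- Let Ω ⊆ ℂⁿ be open, 1 ≤ q ≤ n, and let u be a smooth (0,q)-form with compactly supported coefficients on Ω. Then ∫_Ω |∂̄u|² dV + ∫_Ω |ϑu|² dV = Σ'_{|I|=q} Σ_{k=1}^n ∫_Ω |∂u_I/∂z̄_k|² dV. (This is the Morrey–Kohn–Hörmander identity for compactly supported forms, the special case τ ≡ 1 of the energy identity of Proposition 3.1.) -/

import Mathlib

open scoped BigOperators
open MeasureTheory

namespace HM

/-- The finset of strictly increasing multi-indices of length `q` with entries in `Fin n`. -/
def Incr (n q : ℕ) : Finset (Fin q → Fin n) :=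
  Finset.univ.filter (fun I => ∀ a b : Fin q, a < b → I a < I b)

/-- Prepend the index `k` to a `(q-1)`-tuple `J`, giving the `q`-tuple `kJ`. -/
def cons' {n : ℕ} (q : ℕ) (k : Fin n) (J : Fin (q - 1) → Fin n) : Fin q → Fin n :=
  fun i => if h : (i : ℕ) = 0 then k else J ⟨(i : ℕ) - 1, by have := i.isLt; omega⟩

/-- A (0,q)-coefficient system: an antisymmetric assignment of complex numbers to q-tuples
(hence vanishing on tuples with a repeated index). -/
def IsCoeff {n q : ℕ} (u : (Fin q → Fin n) → ℂ) : Prop :=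
  ∀ (σ : Equiv.Perm (Fin q)) (I : Fin q → Fin n),
    u (I ∘ σ) = ((Equiv.Perm.sign σ : ℤ) : ℂ) * u I

/-- `|u|²`, the sum of `|u_I|²` over strictly increasing multi-indices `I`. -/
noncomputable def nSq {n q : ℕ} (u : (Fin q → Fin n) → ℂ) : ℝ :=
  ∑ I ∈ Incr n q, ‖u I‖ ^ 2

/-- The Hessian form of a matrix `H` on coefficient systems:
`H(u,v) = Σ'_{|J|=q-1} Σ_{k,l} H_{lk} u_{lJ} conj(v_{kJ})`. -/
noncomputable def mForm {n : ℕ} (q : ℕ) (H : Matrix (Fin n) (Fin n) ℂ)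
    (u v : (Fin q → Fin n) → ℂ) : ℂ :=
  ∑ J ∈ Incr n (q - 1), ∑ k : Fin n, ∑ l : Fin n,
    H l k * u (cons' q l J) * star (v (cons' q k J))

/-- `σ^I_J`: the sign of the permutation rearranging `I` into `J`; `0` if `J` is not a
rearrangement of `I` (in particular `0` if `I` has a repeated entry). -/
def permSign {n p : ℕ} (I J : Fin p → Fin n) : ℤ :=
  if Function.Injective I then
    ∑ π : Equiv.Perm (Fin p), if J = I ∘ π then ((Equiv.Perm.sign π : ℤ)) else 0
  else 0

/-- The Wirtinger derivative `∂f/∂z_k` of a complex-valued function, via real Fréchet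
derivatives: `½(∂f/∂x_k − i ∂f/∂y_k)`. -/
noncomputable def dz {n : ℕ} (f : (Fin n → ℂ) → ℂ) (k : Fin n) (z : Fin n → ℂ) : ℂ :=
  (1/2 : ℂ) * (fderiv ℝ f z (Pi.single k 1) - Complex.I * fderiv ℝ f z (Pi.single k Complex.I))

/-- The Wirtinger derivative `∂f/∂z̄_k`: `½(∂f/∂x_k + i ∂f/∂y_k)`. -/
noncomputable def dzbar {n : ℕ} (f : (Fin n → ℂ) → ℂ) (k : Fin n) (z : Fin n → ℂ) : ℂ :=
  (1/2 : ℂ) * (fderiv ℝ f z (Pi.single k 1) + Complex.I * fderiv ℝ f z (Pi.single k Complex.I))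

/-- The mixed Wirtinger Hessian `∂²f/∂z_l∂z̄_k` of a real-valued function. -/
noncomputable def hessW {n : ℕ} (f : (Fin n → ℂ) → ℝ) (l k : Fin n) (z : Fin n → ℂ) : ℂ :=
  dz (fun w => dzbar (fun y => (f y : ℂ)) k w) l z

/-- The Hessian form `i∂∂̄f(u,u)(z) = Σ'_{|J|=q-1} Σ_{k,l} ∂²f/∂z_l∂z̄_k(z) u_{lJ} conj(u_{kJ})`. -/
noncomputable def hForm {n : ℕ} (q : ℕ) (f : (Fin n → ℂ) → ℝ)
    (u : (Fin q → Fin n) → ℂ) (z : Fin n → ℂ) : ℂ :=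
  ∑ J ∈ Incr n (q - 1), ∑ k : Fin n, ∑ l : Fin n,
    hessW f l k z * u (cons' q l J) * star (u (cons' q k J))

/-- Coefficient of `∂̄u` on the `(q+1)`-tuple `M`:
`(∂̄u)_M = Σ_k Σ'_{|J|=q} σ^{kJ}_M ∂u_J/∂z̄_k`. -/
noncomputable def dbarC {n : ℕ} (q : ℕ) (u : (Fin q → Fin n) → (Fin n → ℂ) → ℂ)
    (M : Fin (q + 1) → Fin n) (z : Fin n → ℂ) : ℂ :=
  ∑ k : Fin n, ∑ J ∈ Incr n q, ((permSign (cons' (q + 1) k J) M : ℤ) : ℂ) * dzbar (u J) k z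

/-- Coefficient of `ϑu` on the `(q-1)`-tuple `J`: `(ϑu)_J = −Σ_l ∂u_{lJ}/∂z_l`. -/
noncomputable def thetaC {n : ℕ} (q : ℕ) (u : (Fin q → Fin n) → (Fin n → ℂ) → ℂ)
    (J : Fin (q - 1) → Fin n) (z : Fin n → ℂ) : ℂ :=
  -∑ l : Fin n, dz (u (cons' q l J)) l z

/-- Pointwise `|∂̄u|²`. -/
noncomputable def dbarSq {n : ℕ} (q : ℕ) (u : (Fin q → Fin n) → (Fin n → ℂ) → ℂ)
    (z : Fin n → ℂ) : ℝ :=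
  ∑ M ∈ Incr n (q + 1), ‖dbarC q u M z‖ ^ 2

/-- Pointwise `|ϑu|²`. -/
noncomputable def thetaSq {n : ℕ} (q : ℕ) (u : (Fin q → Fin n) → (Fin n → ℂ) → ℂ)
    (z : Fin n → ℂ) : ℝ :=
  ∑ J ∈ Incr n (q - 1), ‖thetaC q u J z‖ ^ 2

/-- Remove the `i`-th entry of a `j`-tuple, giving a `(j-1)`-tuple. -/
def removeIdx {n j : ℕ} (I : Fin j → Fin n) (i : Fin j) : Fin (j - 1) → Fin n :=
  fun t => if (t : ℕ) < (i : ℕ) then I ⟨t, by have := t.isLt; omega⟩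
    else I ⟨(t : ℕ) + 1, by have := t.isLt; omega⟩

/-- The increasing `j`-tuple listing a finset `S` (with default `d` out of range). -/
def sortedTuple {n : ℕ} (j : ℕ) (S : Finset (Fin n)) (d : Fin n) : Fin j → Fin n :=
  fun t => (S.sort (· ≤ ·)).getD t d

end HM

/-!
Let `ε_k` and `ι_k` be exterior multiplication by `dz̄_k` and contraction with `∂/∂z̄_k`. They are
adjoint to each other, `∂̄u = Σ_k ε_k ∂̄_k u` and `ϑu = -Σ_l ι_l ∂_l u`. The anticommutation
relation `ι_k ε_l + ε_l ι_k = δ_{kl}` turns `|∂̄u|²` into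
`Σ_k |∂̄_k u|² - Σ_{k,l} ⟨ι_l ∂̄_k u, ι_k ∂̄_l u⟩`, while `|ϑu|² = Σ_{k,l} ⟨ι_l ∂_l u, ι_k ∂_k u⟩`.
Integrating by parts twice exchanges `∂̄_k, ∂̄_l` for `∂_l, ∂_k`, so the integrals of the two double
sums cancel.
-/

namespace HM

section PermSign

variable {n q : ℕ}

lemma mem_Incr {I : Fin q → Fin n} : I ∈ Incr n q ↔ StrictMono I := by
  simp [Incr, StrictMono]

lemma cons'_succ (k : Fin n) (J : Fin q → Fin n) :
    cons' (q + 1) k J = (Fin.cons k J : Fin (q + 1) → Fin n) := by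
  ext1 i
  cases i using Fin.cases <;> simp [cons']

lemma permSign_eq_det (I M : Fin q → Fin n) :
    permSign I M = (Matrix.of fun i j => if M j = I i then (1 : ℤ) else 0).det := by
  rw [permSign]
  split_ifs with hI
  · simp [Matrix.det_apply', Fintype.prod_ite_zero, funext_iff]
  · obtain ⟨i, j, hij, hne⟩ := Function.not_injective_iff.mp hI
    exact (Matrix.det_zero_of_row_eq hne (by ext; simp [hij])).symm

lemma permSign_comm (I M : Fin q → Fin n) : permSign I M = permSign M I := by
  simp only [permSign_eq_det]
  rw [← Matrix.det_transpose]
  simp only [Matrix.transpose, Matrix.of_apply, eq_comm]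

lemma permSign_comp_perm (I M : Fin q → Fin n) (σ : Equiv.Perm (Fin q)) :
    permSign I (M ∘ σ) = Equiv.Perm.sign σ * permSign I M := by
  simpa [permSign_eq_det, Matrix.submatrix] using
    Matrix.det_permute' σ (Matrix.of fun i j => if M j = I i then (1 : ℤ) else 0)

lemma permSign_self {I : Fin q → Fin n} (hI : Function.Injective I) : permSign I I = 1 := by
  have hone : (Matrix.of fun i j => if I j = I i then (1 : ℤ) else 0) = 1 := by
    ext i j
    simp [Matrix.one_apply, hI.eq_iff, eq_comm]
  rw [permSign_eq_det, hone, Matrix.det_one]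

lemma permSign_eq_zero_of_ne {I M : Fin q → Fin n} (hI : StrictMono I) (hM : StrictMono M)
    (hne : I ≠ M) : permSign I M = 0 := by
  rw [permSign, if_pos hI.injective]
  refine Finset.sum_eq_zero fun π _ => if_neg ?_
  rintro rfl
  exact hne ((hI.range_inj hM).mp (π.surjective.range_comp I).symm)

lemma permSign_cons (k : Fin n) (J : Fin q → Fin n) (M : Fin (q + 1) → Fin n) :
    permSign (Fin.cons k J : Fin (q + 1) → Fin n) M =
      ∑ p : Fin (q + 1), if M p = k then (-1) ^ (p : ℕ) * permSign J (p.removeNth M) else 0 := by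
  simp only [permSign_eq_det]
  rw [Matrix.det_succ_row_zero]
  refine Finset.sum_congr rfl fun p _ => ?_
  simp only [Matrix.of_apply, Fin.cons_zero, mul_ite, mul_one, mul_zero, ite_mul, zero_mul]
  rfl

end PermSign

section IsCoeff

variable {n q : ℕ} {u v : (Fin q → Fin n) → ℂ}

lemma IsCoeff.eq_zero_of_not_injective (hu : IsCoeff u) {I : Fin q → Fin n}
    (hI : ¬ Function.Injective I) : u I = 0 := by
  obtain ⟨i, j, hij, hne⟩ := Function.not_injective_iff.mp hI
  have hswap : I ∘ Equiv.swap i j = I := by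
    rw [Equiv.comp_swap_eq_update, hij, Function.update_eq_self, ← hij, Function.update_eq_self]
  have hneg := hu (Equiv.swap i j) I
  rw [hswap, Equiv.Perm.sign_swap hne] at hneg
  push_cast at hneg
  linear_combination hneg / 2

lemma IsCoeff.sum {ι : Type*} {s : Finset ι} {w : ι → (Fin q → Fin n) → ℂ}
    (hw : ∀ i ∈ s, IsCoeff (w i)) : IsCoeff (∑ i ∈ s, w i) := by
  intro σ I
  simp only [Finset.sum_apply, Finset.mul_sum]
  exact Finset.sum_congr rfl fun i hi => hw i hi σ I

lemma IsCoeff.ext (hu : IsCoeff u) (hv : IsCoeff v) (h : ∀ I, StrictMono I → u I = v I) :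
    u = v := by
  ext I
  by_cases hI : Function.Injective I
  · have hsort : StrictMono (I ∘ Tuple.sort I) :=
      (Tuple.monotone_sort I).strictMono_of_injective (hI.comp (Tuple.sort I).injective)
    have := h _ hsort
    rw [hu, hv] at this
    exact mul_left_cancel₀ (by simp) this
  · rw [hu.eq_zero_of_not_injective hI, hv.eq_zero_of_not_injective hI]

lemma IsCoeff.sum_permSign_mul (hu : IsCoeff u) (I : Fin q → Fin n) :
    ∑ M ∈ Incr n q, (permSign I M : ℂ) * u M = u I := by
  refine congrFun (IsCoeff.ext (u := fun I => ∑ M ∈ Incr n q, (permSign I M : ℂ) * u M) ?_ hu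
    fun I hI => ?_) I
  · intro σ I
    simp only [permSign_comm _, Finset.mul_sum]
    refine Finset.sum_congr rfl fun M _ => ?_
    rw [permSign_comp_perm, permSign_comm M, Int.cast_mul, mul_assoc]
  · rw [Finset.sum_eq_single_of_mem I (mem_Incr.mpr hI), permSign_self hI.injective]
    · simp
    · intro M hM hne
      simp [permSign_eq_zero_of_ne hI (mem_Incr.mp hM) hne.symm]

end IsCoeff

section ExteriorAlgebra

variable {n q : ℕ}

/-- Exterior multiplication `u ↦ dz̄_k ∧ u`, on coefficients. -/
def extMul (k : Fin n) (u : (Fin q → Fin n) → ℂ) : (Fin (q + 1) → Fin n) → ℂ :=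
  fun M => ∑ J ∈ Incr n q, (permSign (Fin.cons k J : Fin (q + 1) → Fin n) M : ℂ) * u J

/-- Interior multiplication by `∂/∂z̄_k`, on coefficients: `(ι_k u)_J = u_{kJ}`. -/
def contract (k : Fin n) (u : (Fin (q + 1) → Fin n) → ℂ) : (Fin q → Fin n) → ℂ :=
  fun J => u (Fin.cons k J)

/-- The Hermitian inner product `Σ'_I u_I conj(v_I)` of two `(0,q)`-covectors given by their
coefficients. -/
def formInner (u v : (Fin q → Fin n) → ℂ) : ℂ :=
  ∑ I ∈ Incr n q, u I * star (v I)

lemma ofReal_nSq (u : (Fin q → Fin n) → ℂ) : (nSq u : ℂ) = formInner u u := by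
  simp [nSq, formInner, Complex.mul_conj']

lemma star_formInner (u v : (Fin q → Fin n) → ℂ) : star (formInner u v) = formInner v u := by
  simp [formInner, mul_comm]

lemma formInner_sum_left {ι : Type*} (s : Finset ι) (u : ι → (Fin q → Fin n) → ℂ)
    (v : (Fin q → Fin n) → ℂ) :
    formInner (∑ i ∈ s, u i) v = ∑ i ∈ s, formInner (u i) v := by
  simp only [formInner, Finset.sum_apply, Finset.sum_mul]
  exact Finset.sum_comm

lemma formInner_sum_right {ι : Type*} (s : Finset ι) (u : (Fin q → Fin n) → ℂ)
    (v : ι → (Fin q → Fin n) → ℂ) :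
    formInner u (∑ i ∈ s, v i) = ∑ i ∈ s, formInner u (v i) := by
  simp only [← star_formInner _ u, formInner_sum_left, star_sum]

lemma formInner_sub_right (u v w : (Fin q → Fin n) → ℂ) :
    formInner u (v - w) = formInner u v - formInner u w := by
  simp [formInner, mul_sub]

lemma formInner_neg_neg (u v : (Fin q → Fin n) → ℂ) : formInner (-u) (-v) = formInner u v := by
  simp [formInner]

lemma isCoeff_extMul (k : Fin n) (u : (Fin q → Fin n) → ℂ) : IsCoeff (extMul k u) := by
  intro σ M
  simp only [extMul, permSign_comp_perm, Int.cast_mul, Finset.mul_sum, mul_assoc]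

lemma isCoeff_contract {u : (Fin (q + 1) → Fin n) → ℂ} (hu : IsCoeff u) (k : Fin n) :
    IsCoeff (contract k u) := by
  intro σ J
  have hcons : (Fin.cons k (J ∘ σ) : Fin (q + 1) → Fin n) =
      (Fin.cons k J : Fin (q + 1) → Fin n) ∘ Equiv.Perm.decomposeFin.symm (0, σ) := by
    ext1 i
    cases i using Fin.cases <;> simp
  simp [contract, hcons, hu _ _, Equiv.Perm.decomposeFin.symm_sign]

lemma formInner_extMul_left (k : Fin n) (u : (Fin q → Fin n) → ℂ)
    {v : (Fin (q + 1) → Fin n) → ℂ} (hv : IsCoeff v) :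
    formInner (extMul k u) v = formInner u (contract k v) := by
  simp only [formInner, extMul, contract, Finset.sum_mul]
  rw [Finset.sum_comm]
  refine Finset.sum_congr rfl fun J _ => ?_
  rw [← hv.sum_permSign_mul, star_sum, Finset.mul_sum]
  refine Finset.sum_congr rfl fun M _ => ?_
  rw [star_mul', star_intCast]
  ring

lemma formInner_extMul_right (k : Fin n) (u : (Fin q → Fin n) → ℂ)
    {v : (Fin (q + 1) → Fin n) → ℂ} (hv : IsCoeff v) :
    formInner v (extMul k u) = formInner (contract k v) u := by
  rw [← star_formInner, formInner_extMul_left k u hv, star_formInner]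

lemma IsCoeff.extMul_apply {u : (Fin q → Fin n) → ℂ} (hu : IsCoeff u) (k : Fin n)
    (M : Fin (q + 1) → Fin n) :
    extMul k u M =
      ∑ p : Fin (q + 1), if M p = k then (-1) ^ (p : ℕ) * u (p.removeNth M) else 0 := by
  simp only [extMul, permSign_cons, Int.cast_sum, Finset.sum_mul]
  rw [Finset.sum_comm]
  refine Finset.sum_congr rfl fun p _ => ?_
  split_ifs with hp
  · rw [← hu.sum_permSign_mul, Finset.mul_sum]
    refine Finset.sum_congr rfl fun J _ => ?_
    rw [permSign_comm]
    push_cast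
    ring
  · simp

-- The canonical anticommutation relation `ι_k ε_l + ε_l ι_k = δ_{kl}`.
lemma contract_extMul {u : (Fin (q + 1) → Fin n) → ℂ} (hu : IsCoeff u) (k l : Fin n) :
    contract k (extMul l u) = (if k = l then u else 0) - extMul l (contract k u) := by
  ext J
  have hrem (j : Fin (q + 1)) :
      j.succ.removeNth (Fin.cons k J : Fin (q + 2) → Fin n) = Fin.cons k (j.removeNth J) := by
    ext1 i
    cases i using Fin.cases <;> simp [Fin.removeNth]
  simp only [contract, Pi.sub_apply]
  rw [hu.extMul_apply, (isCoeff_contract hu k).extMul_apply, Fin.sum_univ_succ]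
  have hneg (c : Prop) [Decidable c] (x : ℂ) : (if c then -x else 0) = -if c then x else 0 := by
    split_ifs <;> simp
  simp only [Fin.val_zero, pow_zero, Fin.removeNth_zero, Fin.tail_cons, Fin.cons_zero, one_mul,
    Fin.val_succ, Fin.cons_succ, pow_succ, mul_neg, mul_one, neg_mul, hrem, hneg,
    Finset.sum_neg_distrib, contract, ← sub_eq_add_neg]
  split_ifs <;> rfl

theorem formInner_sum_extMul_self {a : Fin n → (Fin (q + 1) → Fin n) → ℂ}
    (ha : ∀ k, IsCoeff (a k)) :
    formInner (∑ k, extMul k (a k)) (∑ k, extMul k (a k)) =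
      ∑ k, formInner (a k) (a k) -
        ∑ k, ∑ l, formInner (contract l (a k)) (contract k (a l)) := by
  have hD : IsCoeff (∑ k, extMul k (a k)) := .sum fun k _ => isCoeff_extMul k (a k)
  have hcontract (k : Fin n) : contract k (∑ l, extMul l (a l)) =
      ∑ l, ((if k = l then a l else 0) - extMul l (contract k (a l))) := by
    simp_rw [← contract_extMul (ha _)]
    ext J
    simp [contract]
  calc formInner (∑ k, extMul k (a k)) (∑ k, extMul k (a k))
      = ∑ k, formInner (a k) (contract k (∑ l, extMul l (a l))) := by
        rw [formInner_sum_left]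
        exact Finset.sum_congr rfl fun k _ => formInner_extMul_left k (a k) hD
    _ = ∑ k, (formInner (a k) (a k) -
          ∑ l, formInner (a k) (extMul l (contract k (a l)))) := by
        refine Finset.sum_congr rfl fun k _ => ?_
        rw [hcontract, Finset.sum_sub_distrib, Finset.sum_ite_eq, if_pos (Finset.mem_univ k),
          formInner_sub_right, formInner_sum_right]
    _ = ∑ k, formInner (a k) (a k) -
          ∑ k, ∑ l, formInner (contract l (a k)) (contract k (a l)) := by
        rw [Finset.sum_sub_distrib]
        simp only [formInner_extMul_right _ _ (ha _)]

end ExteriorAlgebra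

section IntegrationByParts

variable {E 𝕜 : Type*} [NormedAddCommGroup E] [NormedSpace ℝ E] [FiniteDimensional ℝ E]
  [MeasurableSpace E] [BorelSpace E] {μ : Measure E} [μ.IsAddHaarMeasure]
  [NormedField 𝕜] [NormedAlgebra ℝ 𝕜] {f g : E → 𝕜}

lemma integral_fderiv_mul_fderiv (hf : ContDiff ℝ 2 f) (hfc : HasCompactSupport f)
    (hg : ContDiff ℝ 1 g) (v w : E) :
    ∫ x, fderiv ℝ f x v * fderiv ℝ g x w ∂μ = -∫ x, fderiv ℝ (fderiv ℝ f) x w v * g x ∂μ := by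
  have hf' : ContDiff ℝ 1 (fderiv ℝ f) := hf.fderiv_right le_rfl
  have hfv : ContDiff ℝ 1 fun x => fderiv ℝ f x v := hf'.clm_apply contDiff_const
  have hfvc : HasCompactSupport fun x => fderiv ℝ f x v := hfc.fderiv_apply (𝕜 := ℝ) v
  have hfvw (x : E) : fderiv ℝ (fun y => fderiv ℝ f y v) x w = fderiv ℝ (fderiv ℝ f) x w v := by
    rw [fderiv_clm_apply (hf'.differentiable one_ne_zero x) (by fun_prop)]
    simp
  have hfv' : Continuous fun x => fderiv ℝ (fun y => fderiv ℝ f y v) x w :=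
    (hfv.continuous_fderiv one_ne_zero).clm_apply continuous_const
  have hg' : Continuous fun x => fderiv ℝ g x w :=
    (hg.continuous_fderiv one_ne_zero).clm_apply continuous_const
  simp only [← hfvw]
  refine integral_mul_fderiv_eq_neg_fderiv_mul_of_integrable ?_ ?_ ?_
    (fun x _ => hfv.differentiable one_ne_zero x) (fun x _ => hg.differentiable one_ne_zero x)
  · exact (hfv'.mul hg.continuous).integrable_of_hasCompactSupport
      (hfvc.fderiv_apply (𝕜 := ℝ) w).mul_right
  · exact (hfv.continuous.mul hg').integrable_of_hasCompactSupport hfvc.mul_right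
  · exact (hfv.continuous.mul hg.continuous).integrable_of_hasCompactSupport hfvc.mul_right

theorem integral_fderiv_mul_fderiv_comm (hf : ContDiff ℝ 2 f) (hfc : HasCompactSupport f)
    (hg : ContDiff ℝ 1 g) (v w : E) :
    ∫ x, fderiv ℝ f x v * fderiv ℝ g x w ∂μ = ∫ x, fderiv ℝ f x w * fderiv ℝ g x v ∂μ := by
  have hsymm (x : E) : fderiv ℝ (fderiv ℝ f) x w v = fderiv ℝ (fderiv ℝ f) x v w :=
    hf.contDiffAt.isSymmSndFDerivAt (by simp) w v
  simp only [integral_fderiv_mul_fderiv hf hfc hg, hsymm]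

theorem integral_fderiv_mul_star_fderiv_comm [StarRing 𝕜] [ContinuousStar 𝕜] [StarModule ℝ 𝕜]
    (hf : ContDiff ℝ 2 f) (hfc : HasCompactSupport f) (hg : ContDiff ℝ 1 g) (v w : E) :
    ∫ x, fderiv ℝ f x v * star (fderiv ℝ g x w) ∂μ =
      ∫ x, fderiv ℝ f x w * star (fderiv ℝ g x v) ∂μ := by
  have hstar (x : E) (v : E) :
      star (fderiv ℝ g x v) = fderiv ℝ (fun y => star (g y)) x v := by
    rw [fderiv_star]
    rfl
  simp only [hstar]
  exact integral_fderiv_mul_fderiv_comm hf hfc ((starL' ℝ : 𝕜 ≃L[ℝ] 𝕜).contDiff.comp hg) v w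

end IntegrationByParts

section Wirtinger

variable {n : ℕ} {f g : (Fin n → ℂ) → ℂ}

lemma continuous_dz (hf : ContDiff ℝ 1 f) (k : Fin n) : Continuous (dz f k) := by
  have := hf.continuous_fderiv one_ne_zero
  unfold dz
  fun_prop

lemma continuous_dzbar (hf : ContDiff ℝ 1 f) (k : Fin n) : Continuous (dzbar f k) := by
  have := hf.continuous_fderiv one_ne_zero
  unfold dzbar
  fun_prop

lemma dz_eq_zero_of_notMem_tsupport {z : Fin n → ℂ} (hz : z ∉ tsupport f) (k : Fin n) :
    dz f k z = 0 := by
  simp [dz, fderiv_of_notMem_tsupport ℝ hz]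

lemma dzbar_eq_zero_of_notMem_tsupport {z : Fin n → ℂ} (hz : z ∉ tsupport f) (k : Fin n) :
    dzbar f k z = 0 := by
  simp [dzbar, fderiv_of_notMem_tsupport ℝ hz]

lemma hasCompactSupport_dz (hf : HasCompactSupport f) (k : Fin n) :
    HasCompactSupport (dz f k) :=
  hf.mono' fun _ hz => by_contra fun h => hz (dz_eq_zero_of_notMem_tsupport h k)

lemma hasCompactSupport_dzbar (hf : HasCompactSupport f) (k : Fin n) :
    HasCompactSupport (dzbar f k) :=
  hf.mono' fun _ hz => by_contra fun h => hz (dzbar_eq_zero_of_notMem_tsupport h k)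

lemma integrable_dz_mul_star_dz (hf : ContDiff ℝ 1 f) (hfc : HasCompactSupport f)
    (hg : ContDiff ℝ 1 g) (k l : Fin n) : Integrable fun z => dz f k z * star (dz g l z) :=
  ((continuous_dz hf k).mul (continuous_dz hg l).star).integrable_of_hasCompactSupport
    (hasCompactSupport_dz hfc k).mul_right

lemma integrable_dzbar_mul_star_dzbar (hf : ContDiff ℝ 1 f) (hfc : HasCompactSupport f)
    (hg : ContDiff ℝ 1 g) (k l : Fin n) :
    Integrable fun z => dzbar f k z * star (dzbar g l z) :=
  ((continuous_dzbar hf k).mul (continuous_dzbar hg l).star).integrable_of_hasCompactSupport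
    (hasCompactSupport_dzbar hfc k).mul_right

lemma integrable_norm_dzbar_sq (hf : ContDiff ℝ 1 f) (hfc : HasCompactSupport f) (k : Fin n) :
    Integrable fun z => ‖dzbar f k z‖ ^ 2 := by
  simpa [Complex.mul_conj', ← Complex.ofReal_pow] using
    (integrable_dzbar_mul_star_dzbar hf hfc hf k k).re

lemma integral_add_mul_star_add {α : Type*} [MeasurableSpace α] {μ : Measure α}
    (c d : ℂ) {a a' b b' : α → ℂ}
    (h₁ : Integrable (fun x => a x * star (b x)) μ) (h₂ : Integrable (fun x => a x * star (b' x)) μ)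
    (h₃ : Integrable (fun x => a' x * star (b x)) μ)
    (h₄ : Integrable (fun x => a' x * star (b' x)) μ) :
    ∫ x, (a x + c * a' x) * star (b x + d * b' x) ∂μ =
      ∫ x, a x * star (b x) ∂μ + star d * ∫ x, a x * star (b' x) ∂μ +
        c * ∫ x, a' x * star (b x) ∂μ + c * star d * ∫ x, a' x * star (b' x) ∂μ := by
  rw [← integral_const_mul, ← integral_const_mul, ← integral_const_mul, ← integral_add,
    ← integral_add, ← integral_add]
  · congr with x
    rw [star_add, star_mul']
    ring
  all_goals fun_prop

theorem integral_dzbar_mul_star_dzbar (hf : ContDiff ℝ 2 f) (hfc : HasCompactSupport f)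
    (hg : ContDiff ℝ 1 g) (k l : Fin n) :
    ∫ z, dzbar f k z * star (dzbar g l z) = ∫ z, dz f l z * star (dz g k z) := by
  have hcont {h : (Fin n → ℂ) → ℂ} (hh : ContDiff ℝ 1 h) (v : Fin n → ℂ) :
      Continuous fun z => fderiv ℝ h z v :=
    (hh.continuous_fderiv one_ne_zero).clm_apply continuous_const
  have hint (v w : Fin n → ℂ) : Integrable fun z => fderiv ℝ f z v * star (fderiv ℝ g z w) :=
    ((hcont (hf.of_le one_le_two) v).mul (hcont hg w).star).integrable_of_hasCompactSupport
      (hfc.fderiv_apply (𝕜 := ℝ) v).mul_right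
  have hexpand (c d : ℂ) (v v' w w' : Fin n → ℂ) := integral_add_mul_star_add c d
    (hint v w) (hint v w') (hint v' w) (hint v' w')
  have hpull (x y : ℂ) : (1 / 2 : ℂ) * x * star ((1 / 2 : ℂ) * y) = 1 / 4 * (x * star y) := by
    simp only [one_div, star_mul', star_inv₀, star_ofNat]
    ring
  simp only [dz, dzbar, hpull, sub_eq_add_neg, ← neg_mul, integral_const_mul, hexpand]
  simp only [integral_fderiv_mul_star_fderiv_comm hf hfc hg (Pi.single l _)]
  simp only [star_neg, RCLike.star_def, Complex.conj_I, neg_neg, neg_mul, mul_neg,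
    Complex.I_mul_I, one_mul]
  ring

lemma dzbar_const_mul {z : Fin n → ℂ} (hf : DifferentiableAt ℝ f z) (c : ℂ) (k : Fin n) :
    dzbar (fun w => c * f w) k z = c * dzbar f k z := by
  simp only [dzbar, fderiv_const_mul hf, smul_apply, smul_eq_mul]
  ring

end Wirtinger

section Energy

variable {n q : ℕ}

lemma isCoeff_dzbar {u : (Fin q → Fin n) → (Fin n → ℂ) → ℂ} (hu : ∀ z, IsCoeff fun I => u I z)
    {z : Fin n → ℂ} (hd : ∀ I, DifferentiableAt ℝ (u I) z) (k : Fin n) :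
    IsCoeff fun I => dzbar (u I) k z := by
  intro σ I
  have hσ : u (I ∘ σ) = fun w => ((Equiv.Perm.sign σ : ℤ) : ℂ) * u I w :=
    funext fun w => hu w σ I
  simp only [hσ, dzbar_const_mul (hd I)]

lemma dbarC_eq_sum_extMul (u : (Fin q → Fin n) → (Fin n → ℂ) → ℂ) (z : Fin n → ℂ) :
    (fun M => dbarC q u M z) = ∑ k, extMul k fun I => dzbar (u I) k z := by
  ext M
  simp [dbarC, extMul, cons'_succ]

variable {u : (Fin (q + 1) → Fin n) → (Fin n → ℂ) → ℂ}

lemma thetaC_eq_neg_sum_contract (z : Fin n → ℂ) :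
    (fun J => thetaC (q + 1) u J z) = -∑ l, contract l fun I => dz (u I) l z := by
  ext J
  simp [thetaC, contract, cons'_succ]

lemma ofReal_dbarSq (hu : ∀ z, IsCoeff fun I => u I z) {z : Fin n → ℂ}
    (hd : ∀ I, DifferentiableAt ℝ (u I) z) :
    (dbarSq (q + 1) u z : ℂ) =
      ∑ k, (nSq fun I => dzbar (u I) k z : ℂ) -
        ∑ k, ∑ l, formInner (contract l fun I => dzbar (u I) k z)
          (contract k fun I => dzbar (u I) l z) := by
  have hdef : dbarSq (q + 1) u z = nSq fun M => dbarC (q + 1) u M z := rfl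
  rw [hdef, ofReal_nSq, dbarC_eq_sum_extMul, formInner_sum_extMul_self (isCoeff_dzbar hu hd)]
  simp only [ofReal_nSq]

lemma ofReal_thetaSq (z : Fin n → ℂ) :
    (thetaSq (q + 1) u z : ℂ) =
      ∑ k, ∑ l, formInner (contract k fun I => dz (u I) k z)
        (contract l fun I => dz (u I) l z) := by
  have hdef : thetaSq (q + 1) u z = nSq fun J => thetaC (q + 1) u J z := rfl
  rw [hdef, ofReal_nSq, thetaC_eq_neg_sum_contract, formInner_neg_neg, formInner_sum_left]
  simp only [formInner_sum_right]

lemma integrable_nSq_dzbar {q : ℕ} {u : (Fin q → Fin n) → (Fin n → ℂ) → ℂ}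
    (hs : ∀ I, ContDiff ℝ 1 (u I)) (hc : ∀ I, HasCompactSupport (u I)) (k : Fin n) :
    Integrable fun z => nSq fun I => dzbar (u I) k z := by
  have (I : Fin q → Fin n) := integrable_norm_dzbar_sq (hs I) (hc I) k
  unfold nSq
  fun_prop

lemma integrable_formInner_contract_dzbar (hs : ∀ I, ContDiff ℝ 1 (u I))
    (hc : ∀ I, HasCompactSupport (u I)) (k l : Fin n) :
    Integrable fun z => formInner (contract l fun I => dzbar (u I) k z)
      (contract k fun I => dzbar (u I) l z) :=
  integrable_finsetSum _ fun _ _ => integrable_dzbar_mul_star_dzbar (hs _) (hc _) (hs _) k l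

lemma integrable_formInner_contract_dz (hs : ∀ I, ContDiff ℝ 1 (u I))
    (hc : ∀ I, HasCompactSupport (u I)) (k l : Fin n) :
    Integrable fun z => formInner (contract k fun I => dz (u I) k z)
      (contract l fun I => dz (u I) l z) :=
  integrable_finsetSum _ fun _ _ => integrable_dz_mul_star_dz (hs _) (hc _) (hs _) k l

lemma integral_formInner_contract_dzbar (hs : ∀ I, ContDiff ℝ 2 (u I))
    (hc : ∀ I, HasCompactSupport (u I)) (k l : Fin n) :
    ∫ z, formInner (contract l fun I => dzbar (u I) k z) (contract k fun I => dzbar (u I) l z) =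
      ∫ z, formInner (contract l fun I => dz (u I) l z) (contract k fun I => dz (u I) k z) := by
  have hs' (I) : ContDiff ℝ 1 (u I) := (hs I).of_le one_le_two
  simp only [formInner, contract]
  rw [integral_finsetSum _ fun _ _ => integrable_dzbar_mul_star_dzbar (hs' _) (hc _) (hs' _) k l,
    integral_finsetSum _ fun _ _ => integrable_dz_mul_star_dz (hs' _) (hc _) (hs' _) l k]
  exact Finset.sum_congr rfl fun J _ => integral_dzbar_mul_star_dzbar (hs _) (hc _) (hs' _) k l

lemma ofReal_integral_dbarSq (hu : ∀ z, IsCoeff fun I => u I z) (hs : ∀ I, ContDiff ℝ 1 (u I))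
    (hc : ∀ I, HasCompactSupport (u I)) :
    ((∫ z, dbarSq (q + 1) u z : ℝ) : ℂ) =
      ((∑ k, ∫ z, nSq fun I => dzbar (u I) k z : ℝ) : ℂ) -
        ∑ k, ∑ l, ∫ z, formInner (contract l fun I => dzbar (u I) k z)
          (contract k fun I => dzbar (u I) l z) := by
  have hnSq (k : Fin n) : Integrable fun z => ((nSq fun I => dzbar (u I) k z : ℝ) : ℂ) :=
    (integrable_nSq_dzbar hs hc k).ofReal
  have hcross (k l : Fin n) := integrable_formInner_contract_dzbar hs hc k l
  rw [← integral_complex_ofReal]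
  simp only [ofReal_dbarSq hu fun I => (hs I).differentiable one_ne_zero _]
  rw [integral_sub (by fun_prop) (by fun_prop)]
  simp (disch := fun_prop) only [integral_finsetSum, integral_complex_ofReal, Complex.ofReal_sum]

lemma ofReal_integral_thetaSq (hs : ∀ I, ContDiff ℝ 1 (u I))
    (hc : ∀ I, HasCompactSupport (u I)) :
    ((∫ z, thetaSq (q + 1) u z : ℝ) : ℂ) =
      ∑ k, ∑ l, ∫ z, formInner (contract k fun I => dz (u I) k z)
        (contract l fun I => dz (u I) l z) := by
  have hcross (k l : Fin n) := integrable_formInner_contract_dz hs hc k l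
  rw [← integral_complex_ofReal]
  simp (disch := fun_prop) only [ofReal_thetaSq, integral_finsetSum]

theorem integral_dbarSq_add_integral_thetaSq (hu : ∀ z, IsCoeff fun I => u I z)
    (hs : ∀ I, ContDiff ℝ 2 (u I)) (hc : ∀ I, HasCompactSupport (u I)) :
    (∫ z, dbarSq (q + 1) u z) + (∫ z, thetaSq (q + 1) u z) =
      ∑ k, ∫ z, nSq fun I => dzbar (u I) k z := by
  have hs' (I) : ContDiff ℝ 1 (u I) := (hs I).of_le one_le_two
  apply Complex.ofReal_injective
  rw [Complex.ofReal_add, ofReal_integral_dbarSq hu hs' hc, ofReal_integral_thetaSq hs' hc]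
  simp only [integral_formInner_contract_dzbar hs hc]
  rw [Finset.sum_comm, sub_add_cancel]

end Energy

section Support

variable {n q : ℕ} {u : (Fin q → Fin n) → (Fin n → ℂ) → ℂ} {Ω : Set (Fin n → ℂ)}

lemma setIntegral_dbarSq (hΩ : ∀ I, tsupport (u I) ⊆ Ω) :
    ∫ z in Ω, dbarSq q u z = ∫ z, dbarSq q u z := by
  refine setIntegral_eq_integral_of_forall_compl_eq_zero fun z hz => ?_
  simp [dbarSq, dbarC, dzbar_eq_zero_of_notMem_tsupport fun h => hz (hΩ _ h)]

lemma setIntegral_thetaSq (hΩ : ∀ I, tsupport (u I) ⊆ Ω) :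
    ∫ z in Ω, thetaSq q u z = ∫ z, thetaSq q u z := by
  refine setIntegral_eq_integral_of_forall_compl_eq_zero fun z hz => ?_
  simp [thetaSq, thetaC, dz_eq_zero_of_notMem_tsupport fun h => hz (hΩ _ h)]

lemma setIntegral_norm_dzbar_sq {f : (Fin n → ℂ) → ℂ} (hΩ : tsupport f ⊆ Ω) (k : Fin n) :
    ∫ z in Ω, ‖dzbar f k z‖ ^ 2 = ∫ z, ‖dzbar f k z‖ ^ 2 := by
  refine setIntegral_eq_integral_of_forall_compl_eq_zero fun z hz => ?_
  simp [dzbar_eq_zero_of_notMem_tsupport fun h => hz (hΩ h)]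

end Support

end HM

theorem morrey_kohn_hormander_general {n q : ℕ} (hq : 1 ≤ q) {Ω : Set (Fin n → ℂ)}
    {u : (Fin q → Fin n) → (Fin n → ℂ) → ℂ} (hu : ∀ z, HM.IsCoeff fun I => u I z)
    (hs : ∀ I, ContDiff ℝ 2 (u I)) (hc : ∀ I, HasCompactSupport (u I))
    (hΩ : ∀ I, tsupport (u I) ⊆ Ω) :
    (∫ z in Ω, HM.dbarSq q u z) + (∫ z in Ω, HM.thetaSq q u z)
      = ∑ I ∈ HM.Incr n q, ∑ k : Fin n, ∫ z in Ω, ‖HM.dzbar (u I) k z‖ ^ 2 := by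
  obtain ⟨q, rfl⟩ := Nat.exists_eq_add_of_le' hq
  have hs' (I) : ContDiff ℝ 1 (u I) := (hs I).of_le one_le_two
  rw [HM.setIntegral_dbarSq hΩ, HM.setIntegral_thetaSq hΩ,
    HM.integral_dbarSq_add_integral_thetaSq hu hs hc, Finset.sum_comm]
  refine Finset.sum_congr rfl fun k _ => ?_
  simp only [HM.setIntegral_norm_dzbar_sq (hΩ _)]
  exact integral_finsetSum _ fun I _ => HM.integrable_norm_dzbar_sq (hs' I) (hc I) k

/-- the Morrey–Kohn–Hörmander identity for compactly supported forms:
`∫|∂̄u|² + ∫|ϑu|² = Σ'_I Σ_k ∫ |∂u_I/∂z̄_k|²`. -/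
theorem morrey_kohn_hormander (n q : ℕ) (hn : 1 ≤ n) (hq1 : 1 ≤ q) (hqn : q ≤ n)
    (Ω : Set (Fin n → ℂ)) (hΩ : IsOpen Ω)
    (u : (Fin q → Fin n) → (Fin n → ℂ) → ℂ)
    (hua : ∀ z, HM.IsCoeff (fun I => u I z))
    (hus : ∀ I, ContDiff ℝ (⊤ : ℕ∞) (u I))
    (husupp : ∀ I, HasCompactSupport (u I))
    (husub : ∀ I, tsupport (u I) ⊆ Ω) :
    (∫ z in Ω, HM.dbarSq q u z) + (∫ z in Ω, HM.thetaSq q u z)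
      = ∑ I ∈ HM.Incr n q, ∑ k : Fin n, ∫ z in Ω, ‖HM.dzbar (u I) k z‖ ^ 2 :=
  morrey_kohn_hormander_general hq1 hua
    (fun I => (hus I).of_le (WithTop.coe_le_coe.2 (le_top : (2 : ℕ∞) ≤ ⊤))) husupp husub
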